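/- Let I be a bounded interval and Ω = ℝ × I. For any 1 ≤ p < ∞ and s ≥ 0, there is a constant C such that for all f ∈ W^{s,p}(Ω), the slicing estimate ‖f‖_{L^p_x(ℝ; W^{s,p}_y(I))} + ‖f‖_{L^p_y(I; W^{s,p}_x(ℝ))} ≤ C ‖f‖_{W^{s,p}(Ω)} holds; i.e., the W^{s,p} norm of almost every slice (in either variable) is p-integrable and controlled by the full two-dimensional W^{s,p} norm. -/

import Mathlib

open MeasureTheory Real Set ENNReal

/-- Gagliardo seminorm of a function on a 1D set `I`, with fractional order `θ` and
exponent `p`. -/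
noncomputable def gag1 (θ p : ℝ) (I : Set ℝ) (g : ℝ → ℝ) : ℝ≥0∞ :=
  (∫⁻ y in I, ∫⁻ y' in I,
      ENNReal.ofReal (|g y - g y'| ^ p / |y - y'| ^ (1 + θ * p))) ^ (1 / p)

/-- The `W^{s,p}` (Slobodeckij) norm of a 1D function on the set `I`:
`‖g‖_{W^{⌊s⌋,p}}` plus the Gagliardo seminorm of order `s - ⌊s⌋` of `g^{(⌊s⌋)}`. -/
noncomputable def sob1 (s p : ℝ) (I : Set ℝ) (g : ℝ → ℝ) : ℝ≥0∞ :=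
  (∑ j ∈ Finset.range (⌊s⌋₊ + 1),
      eLpNorm (iteratedDeriv j g) (ENNReal.ofReal p) (volume.restrict I))
    + (if s = ⌊s⌋₊ then 0 else gag1 (s - ⌊s⌋₊) p I (iteratedDeriv ⌊s⌋₊ g))

/-- 2D Gagliardo seminorm of order `θ`, exponent `p`, applied to the `m`-th derivative. -/
noncomputable def gag2 (θ p : ℝ) (S : Set (ℝ × ℝ)) (f : ℝ × ℝ → ℝ) (m : ℕ) : ℝ≥0∞ :=
  (∫⁻ z in S, ∫⁻ z' in S,
      ENNReal.ofReal (‖iteratedFDeriv ℝ m f z - iteratedFDeriv ℝ m f z'‖ ^ p /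
        ‖z - z'‖ ^ (2 + θ * p))) ^ (1 / p)

/-- The `W^{s,p}` (Slobodeckij) norm of a 2D function on the set `S`. -/
noncomputable def sob2 (s p : ℝ) (S : Set (ℝ × ℝ)) (f : ℝ × ℝ → ℝ) : ℝ≥0∞ :=
  (∑ j ∈ Finset.range (⌊s⌋₊ + 1),
      eLpNorm (fun z => ‖iteratedFDeriv ℝ j f z‖) (ENNReal.ofReal p) (volume.restrict S))
    + (if s = ⌊s⌋₊ then 0 else gag2 (s - ⌊s⌋₊) p S f ⌊s⌋₊)

/-!
The derivatives of a slice are values of the full derivatives of `f` on unit vectors, so the integer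
part of the estimate is Fubini's theorem and the matter is to bound the one-dimensional Gagliardo
energies of the slices `G (u, ·)` of the top-order derivative `G` by its two-dimensional energy,
with kernels `|t - t'| ^ (-(1 + σ))` and `‖z - w‖ ^ (-(2 + σ))` for some `σ > 0`. For `t, t'` close
to each other, average the triangle inequality
`‖G (u, t) - G (u, t')‖ ≤ ‖G (u, t) - G w‖ + ‖G (u, t') - G w‖` over the points `w` of a box of
height `|t - t'|` and comparable width around the segment from `(u, t)` to `(u, t')`; this turns
`|t - t'| ^ (-(1 + σ))` into `|t - t'| ^ (-(3 + σ))`, integrated over `w` with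
`‖(u, t) - w‖ ≤ |t - t'|`. Integrating in `t'` first leaves, up to a constant, the kernel
`‖(u, t) - w‖ ^ (-(2 + σ))`. For `t, t'` far apart the kernel is integrable in `t'` and the `L ^ p`
norm of `G` suffices.
-/

lemma rpow_sum_le_card_rpow_mul_sum_rpow {ι : Type*} {p : ℝ} (hp : 0 < p) (t : Finset ι)
    (f : ι → ℝ≥0∞) : (∑ i ∈ t, f i) ^ p ≤ (t.card : ℝ≥0∞) ^ p * ∑ i ∈ t, f i ^ p := by
  rcases t.eq_empty_or_nonempty with rfl | ht
  · simp [hp]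
  obtain ⟨i₀, hi₀, hmax⟩ := t.exists_max_image f ht
  calc (∑ i ∈ t, f i) ^ p
      ≤ (t.card * f i₀) ^ p := by
        gcongr
        simpa only [nsmul_eq_mul] using t.sum_le_card_nsmul f (f i₀) hmax
    _ = (t.card : ℝ≥0∞) ^ p * f i₀ ^ p := ENNReal.mul_rpow_of_nonneg _ _ hp.le
    _ ≤ (t.card : ℝ≥0∞) ^ p * ∑ i ∈ t, f i ^ p := by
        gcongr
        exact Finset.single_le_sum (f := fun i => f i ^ p) (fun _ _ => zero_le) hi₀

lemma enorm_sub_rpow_le {E : Type*} [SeminormedAddCommGroup E] {p : ℝ} (hp : 0 ≤ p) (x y z : E) :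
    ‖x - z‖ₑ ^ p ≤ 2 ^ p * (‖x - y‖ₑ ^ p + ‖z - y‖ₑ ^ p) :=
  calc ‖x - z‖ₑ ^ p
      ≤ (‖x - y‖ₑ + ‖z - y‖ₑ) ^ p := by
        gcongr
        rw [← sub_sub_sub_cancel_right x z y]
        exact enorm_sub_le
    _ ≤ 2 ^ p * (‖x - y‖ₑ ^ p + ‖z - y‖ₑ ^ p) :=
        ENNReal.add_rpow_le_two_rpow_mul_rpow_add_rpow _ _ hp

lemma ofReal_norm_rpow_div_norm_rpow {E F : Type*} [SeminormedAddCommGroup E]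
    [NormedAddCommGroup F] {p : ℝ} (hp : 0 < p) (q : ℝ) {x : E} {y : F} (hxy : y = 0 → x = 0) :
    ENNReal.ofReal (‖x‖ ^ p / ‖y‖ ^ q) = ‖x‖ₑ ^ p * ‖y‖ₑ ^ (-q) := by
  rcases eq_or_ne y 0 with rfl | hy
  · simp [hxy rfl, hp, hp.ne', enorm_eq_nnnorm]
  have hy' : 0 < ‖y‖ := norm_pos_iff.2 hy
  rw [ENNReal.ofReal_div_of_pos (by positivity), ← ENNReal.ofReal_rpow_of_pos hy',
    ← ENNReal.ofReal_rpow_of_nonneg (norm_nonneg x) hp.le, ofReal_norm, ofReal_norm,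
    ENNReal.rpow_neg, div_eq_mul_inv]

lemma eLpNorm_ofReal_rpow {α ε : Type*} [MeasurableSpace α] [TopologicalSpace ε]
    [ContinuousENorm ε] {μ : Measure α} {p : ℝ} (hp : 0 < p) (g : α → ε) :
    eLpNorm g (ENNReal.ofReal p) μ ^ p = ∫⁻ x, ‖g x‖ₑ ^ p ∂μ := by
  rw [eLpNorm_eq_lintegral_rpow_enorm_toReal (by simpa using hp) ENNReal.ofReal_ne_top,
    ENNReal.toReal_ofReal hp.le, one_div, ENNReal.rpow_inv_rpow hp.ne']

lemma lintegral_lintegral_add_swap {α : Type*} [MeasurableSpace α] {μ : Measure α} [SFinite μ]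
    {M : α → α → ℝ≥0∞} (hM : Measurable (Function.uncurry M)) :
    ∫⁻ x, ∫⁻ y, M x y + M y x ∂μ ∂μ = 2 * ∫⁻ x, ∫⁻ y, M x y ∂μ ∂μ := by
  have hinner (x : α) : ∫⁻ y, M x y + M y x ∂μ = (∫⁻ y, M x y ∂μ) + ∫⁻ y, M y x ∂μ :=
    lintegral_add_left hM.of_uncurry_left _
  simp_rw [hinner]
  rw [lintegral_add_left hM.lintegral_prod_right, two_mul,
    lintegral_lintegral_swap (f := fun x y => M y x) (hM.comp measurable_swap).aemeasurable]

lemma lintegral_comp_enorm (f : ℝ≥0∞ → ℝ≥0∞) :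
    ∫⁻ x : ℝ, f ‖x‖ₑ = 2 * ∫⁻ x in Ioi (0 : ℝ), f ‖x‖ₑ := by
  have hneg : ∫⁻ x in Iio (0 : ℝ), f ‖x‖ₑ = ∫⁻ x in Ioi (0 : ℝ), f ‖x‖ₑ := by
    rw [← lintegral_indicator measurableSet_Iio, ← lintegral_indicator measurableSet_Ioi,
      ← lintegral_neg_eq_self]
    simp [indicator]
  rw [← lintegral_add_compl _ (measurableSet_Ioi (a := (0 : ℝ))), compl_Ioi,
    setLIntegral_congr Iio_ae_eq_Iic.symm, hneg, two_mul]

lemma lintegral_Ici_enorm_rpow {q ρ : ℝ} (hq : 0 < q) (hρ : 0 < ρ) :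
    ∫⁻ x in Ici ρ, ‖x‖ₑ ^ (-(1 + q)) = ENNReal.ofReal (1 / q) * ENNReal.ofReal ρ ^ (-q) := by
  have hlt : -(1 + q) < -1 := by linarith
  calc ∫⁻ x in Ici ρ, ‖x‖ₑ ^ (-(1 + q))
      = ∫⁻ x in Ioi ρ, ENNReal.ofReal (x ^ (-(1 + q))) := by
        rw [setLIntegral_congr Ioi_ae_eq_Ici.symm]
        refine setLIntegral_congr_fun measurableSet_Ioi fun x hx => ?_
        have hx0 : 0 < x := hρ.trans hx
        simp only [← ENNReal.ofReal_rpow_of_pos hx0, Real.enorm_of_nonneg hx0.le]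
    _ = ENNReal.ofReal (1 / q * ρ ^ (-q)) := by
        rw [← ofReal_integral_eq_lintegral_ofReal (integrableOn_Ioi_rpow_of_lt hlt hρ)
          (ae_restrict_of_forall_mem measurableSet_Ioi fun x hx =>
            Real.rpow_nonneg (hρ.trans hx).le _),
          integral_Ioi_rpow_of_lt hlt hρ, show -(1 + q) + 1 = -q by ring]
        congr 1
        field_simp
    _ = ENNReal.ofReal (1 / q) * ENNReal.ofReal ρ ^ (-q) := by
        rw [ENNReal.ofReal_mul (by positivity), ENNReal.ofReal_rpow_of_pos hρ]

/-- The kernel `r ^ (-q)` cut off to distances `r ≥ ρ`. -/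
noncomputable def tailKernel (q : ℝ) (ρ r : ℝ≥0∞) : ℝ≥0∞ :=
  if ρ ≤ r then r ^ (-q) else 0

lemma tailKernel_of_le {ρ r : ℝ≥0∞} (q : ℝ) (h : ρ ≤ r) : tailKernel q ρ r = r ^ (-q) := if_pos h

lemma measurable_tailKernel (q : ℝ) : Measurable fun x : ℝ≥0∞ × ℝ≥0∞ => tailKernel q x.1 x.2 :=
  Measurable.ite (measurableSet_le measurable_fst measurable_snd)
    (measurable_snd.pow_const _) measurable_const

lemma lintegral_tailKernel_sub_le {q : ℝ} (hq : 0 < q) (ρ : ℝ≥0∞) (t : ℝ) :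
    ∫⁻ t' : ℝ, tailKernel (1 + q) ρ ‖t - t'‖ₑ ≤ ENNReal.ofReal (2 / q) * ρ ^ (-q) := by
  rw [lintegral_sub_left_eq_self fun τ : ℝ => tailKernel (1 + q) ρ ‖τ‖ₑ]
  rcases eq_or_ne ρ 0 with rfl | hρ0
  · simp [ENNReal.zero_rpow_of_neg, hq]
  rcases eq_or_ne ρ ⊤ with rfl | hρ
  · simp [tailKernel]
  obtain ⟨ρ, hρ_pos, rfl⟩ : ∃ r : ℝ, 0 < r ∧ ENNReal.ofReal r = ρ :=
    ⟨ρ.toReal, ENNReal.toReal_pos hρ0 hρ, ENNReal.ofReal_toReal hρ⟩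
  have hcut : ∫⁻ x in Ioi (0 : ℝ), tailKernel (1 + q) (ENNReal.ofReal ρ) ‖x‖ₑ
      = ∫⁻ x in Ici ρ, ‖x‖ₑ ^ (-(1 + q)) := by
    rw [← lintegral_indicator measurableSet_Ioi, ← lintegral_indicator measurableSet_Ici]
    refine lintegral_congr fun x => ?_
    rcases le_or_gt x 0 with hx | hx
    · rw [indicator_of_notMem (notMem_Ioi.2 hx),
        indicator_of_notMem (notMem_Ici.2 (hx.trans_lt hρ_pos))]
    · simp [indicator, tailKernel, hx, Real.enorm_of_nonneg hx.le,
        ENNReal.ofReal_le_ofReal_iff hx.le]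
  rw [lintegral_comp_enorm, hcut, lintegral_Ici_enorm_rpow hq hρ_pos, ← mul_assoc,
    ← ENNReal.ofReal_ofNat 2, ← ENNReal.ofReal_mul zero_le_two, mul_one_div]

/-- The lower density condition of the theory of Sobolev extension domains, with constant one: up to
scale `R`, every ball centred in `U` meets `U` in a set of measure at least its radius. -/
def HasLowerDensity (R : ℝ) (U : Set ℝ) : Prop :=
  ∀ u ∈ U, ∀ r ≤ R, ENNReal.ofReal r ≤ volume (U ∩ Metric.closedBall u r)

lemma hasLowerDensity_of_ordConnected {U : Set ℝ} (hU : U.OrdConnected) {c d : ℝ} (hc : c ∈ U)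
    (hd : d ∈ U) : HasLowerDensity ((d - c) / 2) U := by
  intro u hu r hr
  rw [Real.closedBall_eq_Icc]
  rcases lt_or_ge r 0 with hr0 | hr0
  · simp [ENNReal.ofReal_of_nonpos hr0.le]
  -- The half of the ball on the side of the farther of `c` and `d` lies in `U`.
  rcases le_total u ((c + d) / 2) with hmid | hmid
  · have hsub : Icc u (u + r) ⊆ U := (Icc_subset_Icc_right (by linarith)).trans (hU.out hu hd)
    calc ENNReal.ofReal r = volume (Icc u (u + r)) := by simp
      _ ≤ _ := measure_mono (subset_inter hsub (Icc_subset_Icc_left (by linarith)))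
  · have hsub : Icc (u - r) u ⊆ U := (Icc_subset_Icc_left (by linarith)).trans (hU.out hc hu)
    calc ENNReal.ofReal r = volume (Icc (u - r) u) := by simp
      _ ≤ _ := measure_mono (subset_inter hsub (Icc_subset_Icc_right (by linarith)))

lemma HasLowerDensity.enorm_sub_sq_le_volume {R : ℝ} {U : Set ℝ} (hU : HasLowerDensity R U)
    {u t t' : ℝ} (hu : u ∈ U) (hR : dist t t' ≤ R) :
    ‖t - t'‖ₑ ^ 2 ≤ volume ((U ∩ Metric.closedBall u (dist t t')) ×ˢ uIcc t t') := by
  have hlen : volume (uIcc t t') = ‖t - t'‖ₑ := by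
    rw [Real.volume_interval, enorm_sub_rev, Real.enorm_eq_ofReal_abs]
  rw [Measure.volume_eq_prod, Measure.prod_prod, hlen, sq]
  gcongr
  rw [← ofReal_norm, ← dist_eq_norm]
  exact hU u hu _ hR

lemma enorm_sub_le_of_mem_closedBall_prod_uIcc {u t t' : ℝ} {w : ℝ × ℝ}
    (hw : w ∈ Metric.closedBall u (dist t t') ×ˢ uIcc t t') : ‖(u, t) - w‖ₑ ≤ ‖t - t'‖ₑ := by
  rw [enorm_le_iff_norm_le, ← dist_eq_norm, ← dist_eq_norm, Prod.dist_eq, max_le_iff, dist_comm u]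
  exact ⟨hw.1, Real.dist_left_le_of_mem_uIcc hw.2⟩

section Gagliardo

variable {E : Type*} [SeminormedAddCommGroup E]

lemma enorm_sub_rpow_mul_measure_le {X : Type*} [MeasurableSpace X] {μ : Measure X} {p : ℝ}
    (hp : 0 ≤ p) (G : X → E) (z z' : X) (A : Set X) :
    ‖G z - G z'‖ₑ ^ p * μ A
      ≤ 2 ^ p * ∫⁻ w in A, ‖G z - G w‖ₑ ^ p + ‖G z' - G w‖ₑ ^ p ∂μ := by
  rw [← setLIntegral_const, ← lintegral_const_mul' _ _ (by finiteness)]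
  exact lintegral_mono fun w => enorm_sub_rpow_le hp _ _ _

lemma measurable_enorm_sub_rpow {X : Type*} [MeasurableSpace X] {G : X → E}
    (hG : StronglyMeasurable G) (p : ℝ) : Measurable fun x : X × X => ‖G x.1 - G x.2‖ₑ ^ p :=
  ((hG.comp_measurable measurable_fst).sub (hG.comp_measurable measurable_snd)).enorm.pow_const p

/-- The `p`-th power of the Gagliardo seminorm of `G` on `S`, with kernel exponent `q`; the seminorm
of order `θ` in dimension `n` has `q = n + θ * p`. The kernel is infinite on the diagonal, where the
integrand vanishes for `0 < p` because `0 * ∞ = 0`. -/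
noncomputable def gagliardoEnergy {X : Type*} [SeminormedAddCommGroup X] [MeasureSpace X] (p q : ℝ)
    (S : Set X) (G : X → E) : ℝ≥0∞ :=
  ∫⁻ z in S, ∫⁻ w in S, ‖G z - G w‖ₑ ^ p * ‖z - w‖ₑ ^ (-q)

lemma gagliardoEnergy_mono {X F : Type*} [SeminormedAddCommGroup X] [MeasureSpace X]
    [SeminormedAddCommGroup F] {p : ℝ} (hp : 0 ≤ p) (q : ℝ) (S : Set X) {G : X → E} {H : X → F}
    (h : ∀ z w, ‖G z - G w‖ₑ ≤ ‖H z - H w‖ₑ) :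
    gagliardoEnergy p q S G ≤ gagliardoEnergy p q S H := by
  unfold gagliardoEnergy
  gcongr with z w
  exact h z w

/-- The contribution to `segmentMajorant` of the points `w` of `S` within distance `|z.2 - t'|` of
`z`. -/
noncomputable def nearMajorant (p σ : ℝ) (S : Set (ℝ × ℝ)) (G : ℝ × ℝ → E) (z : ℝ × ℝ) (t' : ℝ) :
    ℝ≥0∞ :=
  ∫⁻ w in S, ‖G z - G w‖ₑ ^ p * tailKernel (3 + σ) ‖z - w‖ₑ ‖z.2 - t'‖ₑ

lemma measurable_nearMajorant_integrand {G : ℝ × ℝ → E}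
    (hG : StronglyMeasurable G) (p σ : ℝ) :
    Measurable fun x : ((ℝ × ℝ) × ℝ) × (ℝ × ℝ) =>
      ‖G x.1.1 - G x.2‖ₑ ^ p * tailKernel (3 + σ) ‖x.1.1 - x.2‖ₑ ‖x.1.1.2 - x.1.2‖ₑ :=
  ((measurable_enorm_sub_rpow hG p).comp
    (by fun_prop : Measurable fun x : ((ℝ × ℝ) × ℝ) × (ℝ × ℝ) => (x.1.1, x.2))).mul
    ((measurable_tailKernel (3 + σ)).comp (by fun_prop :
      Measurable fun x : ((ℝ × ℝ) × ℝ) × (ℝ × ℝ) => (‖x.1.1 - x.2‖ₑ, ‖x.1.1.2 - x.1.2‖ₑ)))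

/-- A function of one endpoint `z` of a vertical segment and of the height `t'` of the other whose
symmetrization in the two endpoints dominates the Gagliardo integrand of order `σ / p` on the
segment: `nearMajorant` serves segments of length at most `R`, the second summand longer ones. -/
noncomputable def segmentMajorant (p σ R : ℝ) (S : Set (ℝ × ℝ)) (G : ℝ × ℝ → E) (z : ℝ × ℝ)
    (t' : ℝ) : ℝ≥0∞ :=
  nearMajorant p σ S G z t' + ‖G z‖ₑ ^ p * tailKernel (1 + σ) (ENNReal.ofReal R) ‖z.2 - t'‖ₑ

variable {p σ R : ℝ} {U T : Set ℝ} {S : Set (ℝ × ℝ)} {G : ℝ × ℝ → E}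

lemma measurable_segmentMajorant (hG : StronglyMeasurable G) (p σ R : ℝ) (S : Set (ℝ × ℝ)) :
    Measurable fun x : (ℝ × ℝ) × ℝ => segmentMajorant p σ R S G x.1 x.2 :=
  (measurable_nearMajorant_integrand hG p σ).lintegral_prod_right'.add
    (((hG.comp_measurable measurable_fst).enorm.pow_const p).mul
      ((measurable_tailKernel (1 + σ)).comp (by fun_prop :
        Measurable fun x : (ℝ × ℝ) × ℝ => (ENNReal.ofReal R, ‖x.1.2 - x.2‖ₑ))))

lemma enorm_sub_rpow_mul_le_nearMajorant (hU : HasLowerDensity R U) (hUm : MeasurableSet U)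
    (hT : T.OrdConnected) (hp : 0 ≤ p) (hG : StronglyMeasurable G) {u t t' : ℝ} (hu : u ∈ U)
    (ht : t ∈ T) (ht' : t' ∈ T) (hne : t ≠ t') (hR : dist t t' ≤ R) :
    ‖G (u, t) - G (u, t')‖ₑ ^ p * ‖t - t'‖ₑ ^ (-(1 + σ)) ≤ 2 ^ p *
      (nearMajorant p σ (U ×ˢ T) G (u, t) t' + nearMajorant p σ (U ×ˢ T) G (u, t') t) := by
  set A : Set (ℝ × ℝ) := (U ∩ Metric.closedBall u (dist t t')) ×ˢ uIcc t t'
  have hAm : MeasurableSet A := (hUm.inter measurableSet_closedBall).prod measurableSet_uIcc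
  have hAS : A ⊆ U ×ˢ T := prod_mono inter_subset_left (hT.uIcc_subset ht ht')
  have hr0 : ‖t - t'‖ₑ ≠ 0 := enorm_ne_zero.2 (sub_ne_zero.2 hne)
  have hdist : ∀ w ∈ A, ‖(u, t) - w‖ₑ ≤ ‖t - t'‖ₑ := fun w hw =>
    enorm_sub_le_of_mem_closedBall_prod_uIcc ⟨hw.1.2, hw.2⟩
  have hdist' : ∀ w ∈ A, ‖(u, t') - w‖ₑ ≤ ‖t' - t‖ₑ := fun w hw =>
    enorm_sub_le_of_mem_closedBall_prod_uIcc ⟨dist_comm t t' ▸ hw.1.2, uIcc_comm t t' ▸ hw.2⟩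
  have hkernel : ‖t - t'‖ₑ ^ (-(1 + σ)) = ‖t - t'‖ₑ ^ 2 * ‖t - t'‖ₑ ^ (-(3 + σ)) := by
    rw [← ENNReal.rpow_two, ← ENNReal.rpow_add _ _ hr0 enorm_ne_top]
    ring_nf
  calc ‖G (u, t) - G (u, t')‖ₑ ^ p * ‖t - t'‖ₑ ^ (-(1 + σ))
      ≤ ‖G (u, t) - G (u, t')‖ₑ ^ p * volume A * ‖t - t'‖ₑ ^ (-(3 + σ)) := by
        rw [hkernel, ← mul_assoc]
        gcongr
        exact hU.enorm_sub_sq_le_volume hu hR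
    _ ≤ 2 ^ p * ((∫⁻ w in A, ‖G (u, t) - G w‖ₑ ^ p + ‖G (u, t') - G w‖ₑ ^ p)
          * ‖t - t'‖ₑ ^ (-(3 + σ))) := by
        rw [← mul_assoc]
        gcongr ?_ * _
        exact enorm_sub_rpow_mul_measure_le hp G _ _ A
    _ = 2 ^ p * ∫⁻ w in A,
          ‖G (u, t) - G w‖ₑ ^ p * tailKernel (3 + σ) ‖(u, t) - w‖ₑ ‖t - t'‖ₑ
            + ‖G (u, t') - G w‖ₑ ^ p * tailKernel (3 + σ) ‖(u, t') - w‖ₑ ‖t' - t‖ₑ := by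
        rw [← lintegral_mul_const' _ _ (ENNReal.rpow_ne_top_of_ne_zero hr0 enorm_ne_top)]
        congr 1
        refine setLIntegral_congr_fun hAm fun w hw => ?_
        simp only [tailKernel_of_le _ (hdist w hw), tailKernel_of_le _ (hdist' w hw), add_mul]
        rw [enorm_sub_rev t' t]
    _ ≤ 2 ^ p * ∫⁻ w in U ×ˢ T,
          ‖G (u, t) - G w‖ₑ ^ p * tailKernel (3 + σ) ‖(u, t) - w‖ₑ ‖t - t'‖ₑ
            + ‖G (u, t') - G w‖ₑ ^ p * tailKernel (3 + σ) ‖(u, t') - w‖ₑ ‖t' - t‖ₑ := by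
        gcongr
    _ = _ := by
        congr 1
        exact lintegral_add_left ((measurable_nearMajorant_integrand hG p σ).comp
          (measurable_prodMk_left (x := ((u, t), t')))) _

lemma enorm_sub_rpow_mul_le_segmentMajorant (hU : HasLowerDensity R U) (hUm : MeasurableSet U)
    (hT : T.OrdConnected) (hp : 0 < p) (hG : StronglyMeasurable G) {u t t' : ℝ} (hu : u ∈ U)
    (ht : t ∈ T) (ht' : t' ∈ T) :
    ‖G (u, t) - G (u, t')‖ₑ ^ p * ‖t - t'‖ₑ ^ (-(1 + σ)) ≤ 2 ^ p *
      (segmentMajorant p σ R (U ×ˢ T) G (u, t) t'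
        + segmentMajorant p σ R (U ×ˢ T) G (u, t') t) := by
  rcases eq_or_ne t t' with rfl | hne
  · simp [hp, enorm_eq_nnnorm]
  rcases le_total (dist t t') R with hR | hR
  · refine (enorm_sub_rpow_mul_le_nearMajorant hU hUm hT hp.le hG hu ht ht' hne hR).trans ?_
    unfold segmentMajorant
    gcongr <;> exact le_self_add
  · have hle : ENNReal.ofReal R ≤ ‖t - t'‖ₑ := by
      rw [← ofReal_norm, ← dist_eq_norm]
      exact ENNReal.ofReal_le_ofReal hR
    have htri : ‖G (u, t) - G (u, t')‖ₑ ^ p ≤ 2 ^ p * (‖G (u, t)‖ₑ ^ p + ‖G (u, t')‖ₑ ^ p) := by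
      simpa only [sub_zero] using enorm_sub_rpow_le hp.le (G (u, t)) 0 (G (u, t'))
    calc ‖G (u, t) - G (u, t')‖ₑ ^ p * ‖t - t'‖ₑ ^ (-(1 + σ))
        ≤ 2 ^ p * (‖G (u, t)‖ₑ ^ p * ‖t - t'‖ₑ ^ (-(1 + σ))
          + ‖G (u, t')‖ₑ ^ p * ‖t' - t‖ₑ ^ (-(1 + σ))) := by
          rw [enorm_sub_rev t' t, ← add_mul, ← mul_assoc]
          gcongr
      _ ≤ _ := by
          unfold segmentMajorant
          rw [tailKernel_of_le _ hle, tailKernel_of_le _ (enorm_sub_rev t t' ▸ hle)]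
          gcongr <;> exact le_add_self

lemma lintegral_nearMajorant_le (hσ : 0 < σ) (hp : 0 ≤ p) (hG : StronglyMeasurable G) (z : ℝ × ℝ) :
    ∫⁻ t', nearMajorant p σ S G z t'
      ≤ ENNReal.ofReal (2 / (2 + σ)) * ∫⁻ w in S, ‖G z - G w‖ₑ ^ p * ‖z - w‖ₑ ^ (-(2 + σ)) := by
  have hmeas : Measurable (Function.uncurry fun (t' : ℝ) (w : ℝ × ℝ) =>
      ‖G z - G w‖ₑ ^ p * tailKernel (3 + σ) ‖z - w‖ₑ ‖z.2 - t'‖ₑ) :=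
    (measurable_nearMajorant_integrand hG p σ).comp
      (by fun_prop : Measurable fun x : ℝ × (ℝ × ℝ) => ((z, x.1), x.2))
  unfold nearMajorant
  rw [lintegral_lintegral_swap hmeas.aemeasurable, ← lintegral_const_mul' _ _ (by finiteness)]
  refine lintegral_mono fun w => ?_
  calc ∫⁻ t', ‖G z - G w‖ₑ ^ p * tailKernel (3 + σ) ‖z - w‖ₑ ‖z.2 - t'‖ₑ
      = ‖G z - G w‖ₑ ^ p * ∫⁻ t', tailKernel (1 + (2 + σ)) ‖z - w‖ₑ ‖z.2 - t'‖ₑ := by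
        rw [lintegral_const_mul' _ _ (ENNReal.rpow_ne_top_of_nonneg hp enorm_ne_top)]
        ring_nf
    _ ≤ ‖G z - G w‖ₑ ^ p * (ENNReal.ofReal (2 / (2 + σ)) * ‖z - w‖ₑ ^ (-(2 + σ))) := by
        gcongr
        exact lintegral_tailKernel_sub_le (by linarith) _ _
    _ = _ := mul_left_comm _ _ _

lemma lintegral_segmentMajorant_le (hσ : 0 < σ) (hp : 0 ≤ p) (hG : StronglyMeasurable G) (R : ℝ)
    (z : ℝ × ℝ) :
    ∫⁻ t', segmentMajorant p σ R S G z t'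
      ≤ ENNReal.ofReal (2 / (2 + σ)) * (∫⁻ w in S, ‖G z - G w‖ₑ ^ p * ‖z - w‖ₑ ^ (-(2 + σ)))
        + ENNReal.ofReal (2 / σ) * ENNReal.ofReal R ^ (-σ) * ‖G z‖ₑ ^ p := by
  have hnear : Measurable (nearMajorant p σ S G z) :=
    (measurable_nearMajorant_integrand hG p σ).lintegral_prod_right'.of_uncurry_left (x := z)
  unfold segmentMajorant
  rw [lintegral_add_left hnear,
    lintegral_const_mul' _ _ (ENNReal.rpow_ne_top_of_nonneg hp enorm_ne_top),
    mul_comm _ (‖G z‖ₑ ^ p)]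
  gcongr
  · exact lintegral_nearMajorant_le hσ hp hG z
  · exact lintegral_tailKernel_sub_le hσ _ _

lemma lintegral_gagliardoEnergy_slice_le_lintegral_segmentMajorant (hU : HasLowerDensity R U)
    (hUm : MeasurableSet U) (hT : T.OrdConnected) (hp : 0 < p) (hG : StronglyMeasurable G) :
    ∫⁻ u in U, gagliardoEnergy p (1 + σ) T (fun t => G (u, t))
      ≤ 2 ^ p * (2 * ∫⁻ z in U ×ˢ T, ∫⁻ t' in T, segmentMajorant p σ R (U ×ˢ T) G z t') := by
  have hbound : ∀ u ∈ U, ∀ t ∈ T, ∀ t' ∈ T,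
      ‖G (u, t) - G (u, t')‖ₑ ^ p * ‖t - t'‖ₑ ^ (-(1 + σ)) ≤ 2 ^ p *
        (segmentMajorant p σ R (U ×ˢ T) G (u, t) t'
          + segmentMajorant p σ R (U ×ˢ T) G (u, t') t) := fun u hu t ht t' ht' =>
    enorm_sub_rpow_mul_le_segmentMajorant hU hUm hT hp hG hu ht ht'
  have hM := measurable_segmentMajorant hG p σ R (U ×ˢ T)
  generalize segmentMajorant p σ R (U ×ˢ T) G = M at hbound hM ⊢
  have hMu (u : ℝ) : Measurable (Function.uncurry fun t t' => M (u, t) t') :=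
    hM.comp (by fun_prop : Measurable fun x : ℝ × ℝ => ((u, x.1), x.2))
  calc ∫⁻ u in U, gagliardoEnergy p (1 + σ) T (fun t => G (u, t))
      ≤ ∫⁻ u in U, ∫⁻ t in T, ∫⁻ t' in T, 2 ^ p * (M (u, t) t' + M (u, t') t) :=
        setLIntegral_mono' hUm fun u hu => setLIntegral_mono' hT.measurableSet fun t ht =>
          setLIntegral_mono' hT.measurableSet fun t' ht' => hbound u hu t ht t' ht'
    _ = 2 ^ p * ∫⁻ u in U, 2 * ∫⁻ t in T, ∫⁻ t' in T, M (u, t) t' := by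
        simp_rw [lintegral_const_mul' _ _ (by finiteness : (2 : ℝ≥0∞) ^ p ≠ ⊤)]
        exact congrArg _ (lintegral_congr fun u => lintegral_lintegral_add_swap (hMu u))
    _ = 2 ^ p * (2 * ∫⁻ z in U ×ˢ T, ∫⁻ t' in T, M z t') := by
        rw [lintegral_const_mul' _ _ (by finiteness), Measure.volume_eq_prod,
          setLIntegral_prod _ hM.lintegral_prod_right'.aemeasurable]

theorem lintegral_gagliardoEnergy_slice_le (hU : HasLowerDensity R U) (hUm : MeasurableSet U)
    (hT : T.OrdConnected) (hp : 0 < p) (hσ : 0 < σ) (hG : StronglyMeasurable G) :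
    ∫⁻ u in U, gagliardoEnergy p (1 + σ) T (fun t => G (u, t))
      ≤ 2 ^ p * (2 * (ENNReal.ofReal (2 / (2 + σ)) * gagliardoEnergy p (2 + σ) (U ×ˢ T) G
        + ENNReal.ofReal (2 / σ) * ENNReal.ofReal R ^ (-σ) * ∫⁻ z in U ×ˢ T, ‖G z‖ₑ ^ p)) := by
  have hφ : Measurable fun z => ‖G z‖ₑ ^ p := hG.enorm.pow_const p
  refine (lintegral_gagliardoEnergy_slice_le_lintegral_segmentMajorant hU hUm hT hp hG).trans ?_
  gcongr 2 ^ p * (2 * ?_)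
  calc ∫⁻ z in U ×ˢ T, ∫⁻ t' in T, segmentMajorant p σ R (U ×ˢ T) G z t'
      ≤ ∫⁻ z in U ×ˢ T, (ENNReal.ofReal (2 / (2 + σ)) *
          (∫⁻ w in U ×ˢ T, ‖G z - G w‖ₑ ^ p * ‖z - w‖ₑ ^ (-(2 + σ)))
          + ENNReal.ofReal (2 / σ) * ENNReal.ofReal R ^ (-σ) * ‖G z‖ₑ ^ p) :=
        lintegral_mono fun z =>
          (setLIntegral_le_lintegral _ _).trans (lintegral_segmentMajorant_le hσ hp.le hG R z)
    _ = _ := by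
        rw [lintegral_add_right _ (hφ.const_mul _), lintegral_const_mul' _ _ (by finiteness),
          lintegral_const_mul _ hφ, gagliardoEnergy]

theorem exists_lintegral_gagliardoEnergy_slice_le (hU : U.OrdConnected) (hT : T.OrdConnected)
    (hp : 0 < p) (hσ : 0 < σ) :
    ∃ C : ℝ≥0∞, C ≠ ⊤ ∧ ∀ G : ℝ × ℝ → E, StronglyMeasurable G →
      ∫⁻ u in U, gagliardoEnergy p (1 + σ) T (fun t => G (u, t))
        ≤ C * (gagliardoEnergy p (2 + σ) (U ×ˢ T) G + ∫⁻ z in U ×ˢ T, ‖G z‖ₑ ^ p) := by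
  rcases U.subsingleton_or_nontrivial with hU₀ | hU₁
  · exact ⟨0, zero_ne_top, fun G _ => by simp [setLIntegral_measure_zero, hU₀.measure_zero]⟩
  obtain ⟨c, hc, d, hd, hcd⟩ := hU₁.exists_lt
  set C₁ := ENNReal.ofReal (2 / (2 + σ))
  set C₂ := ENNReal.ofReal (2 / σ) * ENNReal.ofReal ((d - c) / 2) ^ (-σ)
  have hC₂_top : C₂ ≠ ⊤ := ENNReal.mul_ne_top ENNReal.ofReal_ne_top
    (ENNReal.rpow_ne_top_of_ne_zero (by simpa using hcd) ENNReal.ofReal_ne_top)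
  refine ⟨2 ^ p * (2 * (C₁ + C₂)), by finiteness, fun G hG => ?_⟩
  refine (lintegral_gagliardoEnergy_slice_le (hasLowerDensity_of_ordConnected hU hc hd)
    hU.measurableSet hT hp hσ hG).trans ?_
  rw [mul_assoc (2 ^ p : ℝ≥0∞), mul_assoc (2 : ℝ≥0∞), add_mul]
  gcongr
  · exact le_self_add
  · exact le_add_self

end Gagliardo

lemma gag1_rpow {θ p : ℝ} (hp : 0 < p) (I : Set ℝ) (g : ℝ → ℝ) :
    gag1 θ p I g ^ p = gagliardoEnergy p (1 + θ * p) I g := by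
  rw [gag1, one_div, ENNReal.rpow_inv_rpow hp.ne', gagliardoEnergy]
  refine lintegral_congr fun y => lintegral_congr fun y' => ?_
  simp only [← Real.norm_eq_abs]
  exact ofReal_norm_rpow_div_norm_rpow hp _ fun h => by rw [sub_eq_zero.1 h, sub_self]

lemma gag2_rpow {θ p : ℝ} (hp : 0 < p) (S : Set (ℝ × ℝ)) (f : ℝ × ℝ → ℝ) (m : ℕ) :
    gag2 θ p S f m ^ p = gagliardoEnergy p (2 + θ * p) S (iteratedFDeriv ℝ m f) := by
  rw [gag2, one_div, ENNReal.rpow_inv_rpow hp.ne', gagliardoEnergy]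
  refine lintegral_congr fun z => lintegral_congr fun w => ?_
  exact ofReal_norm_rpow_div_norm_rpow hp _ fun h => by rw [sub_eq_zero.1 h, sub_self]

lemma sob1_rpow_le {p : ℝ} (hp : 0 < p) (s : ℝ) (I : Set ℝ) (g : ℝ → ℝ) :
    sob1 s p I g ^ p ≤ 2 ^ p * ((⌊s⌋₊ + 1 : ℕ) ^ p
        * (∑ j ∈ Finset.range (⌊s⌋₊ + 1), ∫⁻ t in I, ‖iteratedDeriv j g t‖ₑ ^ p)
      + if s = ⌊s⌋₊ then 0
        else gagliardoEnergy p (1 + (s - ⌊s⌋₊) * p) I (iteratedDeriv ⌊s⌋₊ g)) := by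
  refine (ENNReal.add_rpow_le_two_rpow_mul_rpow_add_rpow _ _ hp.le).trans ?_
  gcongr 2 ^ p * (?_ + ?_)
  · simpa only [eLpNorm_ofReal_rpow hp, Finset.card_range] using
      rpow_sum_le_card_rpow_mul_sum_rpow hp (Finset.range (⌊s⌋₊ + 1)) fun j =>
        eLpNorm (iteratedDeriv j g) (ENNReal.ofReal p) (volume.restrict I)
  · split_ifs
    · rw [ENNReal.zero_rpow_of_pos hp]
    · rw [gag1_rpow hp]

lemma lintegral_enorm_iteratedFDeriv_rpow_le_sob2_rpow {s p : ℝ} (hp : 0 < p) (S : Set (ℝ × ℝ))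
    (f : ℝ × ℝ → ℝ) {j : ℕ} (hj : j ≤ ⌊s⌋₊) :
    ∫⁻ z in S, ‖iteratedFDeriv ℝ j f z‖ₑ ^ p ≤ sob2 s p S f ^ p := by
  have hpow := eLpNorm_ofReal_rpow (μ := volume.restrict S) hp fun z => ‖iteratedFDeriv ℝ j f z‖
  simp only [enorm_norm] at hpow
  rw [← hpow]
  gcongr
  exact le_add_right (Finset.single_le_sum
    (f := fun j => eLpNorm (fun z => ‖iteratedFDeriv ℝ j f z‖) (ENNReal.ofReal p)
      (volume.restrict S)) (fun _ _ => zero_le) (Finset.mem_range.2 (Nat.lt_succ_of_le hj)))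

lemma gagliardoEnergy_iteratedFDeriv_le_sob2_rpow {s p : ℝ} (hp : 0 < p) (S : Set (ℝ × ℝ))
    (f : ℝ × ℝ → ℝ) (hs : s ≠ ⌊s⌋₊) :
    gagliardoEnergy p (2 + (s - ⌊s⌋₊) * p) S (iteratedFDeriv ℝ ⌊s⌋₊ f) ≤ sob2 s p S f ^ p := by
  rw [← gag2_rpow hp, sob2, if_neg hs]
  gcongr
  exact le_add_self

section Isometry

variable {𝕜 E F G : Type*} [NontriviallyNormedField 𝕜] [NormedAddCommGroup E] [NormedSpace 𝕜 E]
  [NormedAddCommGroup F] [NormedSpace 𝕜 F] [NormedAddCommGroup G] [NormedSpace 𝕜 G]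

lemma norm_iteratedFDeriv_sub_comp_linearIsometryEquiv (e : E ≃ₗᵢ[𝕜] F) (f : F → G) (m : ℕ)
    (x y : E) :
    ‖iteratedFDeriv 𝕜 m (f ∘ e) x - iteratedFDeriv 𝕜 m (f ∘ e) y‖
      = ‖iteratedFDeriv 𝕜 m f (e x) - iteratedFDeriv 𝕜 m f (e y)‖ := by
  have hcomp (x : E) : iteratedFDeriv 𝕜 m (f ∘ e) x
      = (iteratedFDeriv 𝕜 m f (e x)).compContinuousLinearMap fun _ =>
          (e.toContinuousLinearEquiv : E →L[𝕜] F) := by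
    simpa only [preimage_univ, iteratedFDerivWithin_univ,
      LinearIsometryEquiv.coe_toContinuousLinearEquiv] using
      e.toContinuousLinearEquiv.iteratedFDerivWithin_comp_right f uniqueDiffOn_univ
        (mem_univ (e x)) m
  rw [hcomp, hcomp]
  exact ContinuousMultilinearMap.norm_compContinuous_linearIsometryEquiv
    (iteratedFDeriv 𝕜 m f (e x) - iteratedFDeriv 𝕜 m f (e y)) fun _ => e

end Isometry

lemma sob2_comp_linearIsometryEquiv (s p : ℝ) (S : Set (ℝ × ℝ)) (f : ℝ × ℝ → ℝ)
    (e : (ℝ × ℝ) ≃ₗᵢ[ℝ] ℝ × ℝ) (he : MeasurePreserving e) :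
    sob2 s p (e ⁻¹' S) (f ∘ e) = sob2 s p S f := by
  have hemb : MeasurableEmbedding e := e.toHomeomorph.measurableEmbedding
  have hLp (j : ℕ) : eLpNorm (fun z => ‖iteratedFDeriv ℝ j (f ∘ e) z‖) (ENNReal.ofReal p)
      (volume.restrict (e ⁻¹' S))
      = eLpNorm (fun z => ‖iteratedFDeriv ℝ j f z‖) (ENNReal.ofReal p) (volume.restrict S) := by
    rw [← (he.restrict_preimage_emb hemb S).map_eq, hemb.eLpNorm_map_measure]
    simp only [Function.comp_def, ← LinearIsometryEquiv.norm_iteratedFDeriv_comp_right e f]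
  have hgag : gag2 (s - ⌊s⌋₊) p (e ⁻¹' S) (f ∘ e) ⌊s⌋₊ = gag2 (s - ⌊s⌋₊) p S f ⌊s⌋₊ := by
    rw [gag2, gag2]
    congr 1
    refine .trans (lintegral_congr fun z => ?_) (he.setLIntegral_comp_preimage_emb hemb _ S)
    refine .trans (lintegral_congr fun w => ?_) (he.setLIntegral_comp_preimage_emb hemb _ S)
    rw [norm_iteratedFDeriv_sub_comp_linearIsometryEquiv, ← map_sub e, e.norm_map]
  rw [sob2, sob2, hgag, Finset.sum_congr rfl fun j _ => hLp j]

section Slice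

variable {𝕜 E F : Type*} [NontriviallyNormedField 𝕜] [NormedAddCommGroup E] [NormedSpace 𝕜 E]
  [NormedAddCommGroup F] [NormedSpace 𝕜 F]

lemma iteratedDeriv_comp_add_smul {n : WithTop ℕ∞} {f : E → F} (hf : ContDiff 𝕜 n f) {j : ℕ}
    (hj : (j : WithTop ℕ∞) ≤ n) (c v : E) (t : 𝕜) :
    iteratedDeriv j (fun t : 𝕜 => f (c + t • v)) t
      = iteratedFDeriv 𝕜 j f (c + t • v) fun _ => v := by
  have hf' : ContDiff 𝕜 n fun z => f (c + z) := hf.comp (contDiff_const.add contDiff_id)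
  have hcomp := (ContinuousLinearMap.toSpanSingleton 𝕜 v).iteratedFDeriv_comp_right hf' t hj
  rw [iteratedFDeriv_comp_add_left] at hcomp
  rw [iteratedDeriv_eq_iteratedFDeriv]
  change iteratedFDeriv 𝕜 j ((fun z => f (c + z)) ∘ ContinuousLinearMap.toSpanSingleton 𝕜 v) t _ = _
  simp [hcomp, ContinuousMultilinearMap.compContinuousLinearMap_apply]

lemma iteratedDeriv_slice {n : WithTop ℕ∞} {f : E × 𝕜 → F} (hf : ContDiff 𝕜 n f) {j : ℕ}
    (hj : (j : WithTop ℕ∞) ≤ n) (x : E) (t : 𝕜) :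
    iteratedDeriv j (fun t => f (x, t)) t = iteratedFDeriv 𝕜 j f (x, t) fun _ => (0, 1) := by
  simpa using iteratedDeriv_comp_add_smul hf hj (x, 0) (0, 1) t

lemma continuous_iteratedDeriv_slice {n : WithTop ℕ∞} {f : E × 𝕜 → F} (hf : ContDiff 𝕜 n f)
    {j : ℕ} (hj : (j : WithTop ℕ∞) ≤ n) :
    Continuous fun z : E × 𝕜 => iteratedDeriv j (fun t => f (z.1, t)) z.2 := by
  simp only [iteratedDeriv_slice hf hj]
  exact (ContinuousMultilinearMap.apply 𝕜 (fun _ : Fin j => E × 𝕜) F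
    fun _ => (0, 1)).continuous.comp (hf.continuous_iteratedFDeriv hj)

lemma enorm_apply_const_le {ι : Type*} [Fintype ι]
    (A : ContinuousMultilinearMap 𝕜 (fun _ : ι => E) F) {v : E} (hv : ‖v‖ ≤ 1) :
    ‖A fun _ => v‖ₑ ≤ ‖A‖ₑ := by
  rw [enorm_le_iff_norm_le]
  exact (A.le_opNorm _).trans (mul_le_of_le_one_right (norm_nonneg _)
    (Finset.prod_le_one (fun _ _ => norm_nonneg _) fun _ _ => hv))

end Slice

section Slicing

variable {p s : ℝ} {U T : Set ℝ} {f : ℝ × ℝ → ℝ}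

lemma lintegral_enorm_iteratedDeriv_slice_rpow_le (U T : Set ℝ) (hp : 0 < p)
    (hf : ContDiff ℝ (⌊s⌋₊ : ℕ) f) {j : ℕ} (hj : j ≤ ⌊s⌋₊) :
    ∫⁻ x in U, ∫⁻ t in T, ‖iteratedDeriv j (fun y => f (x, y)) t‖ₑ ^ p
      ≤ sob2 s p (U ×ˢ T) f ^ p := by
  have hj' : (j : WithTop ℕ∞) ≤ (⌊s⌋₊ : ℕ) := by exact_mod_cast hj
  refine le_trans ?_ (lintegral_enorm_iteratedFDeriv_rpow_le_sob2_rpow hp (U ×ˢ T) f hj)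
  rw [Measure.volume_eq_prod, setLIntegral_prod _
    ((hf.continuous_iteratedFDeriv hj').enorm.measurable.pow_const p).aemeasurable]
  gcongr with x t
  rw [iteratedDeriv_slice hf hj']
  exact enorm_apply_const_le _ (by simp [Prod.norm_def])

lemma exists_lintegral_gagliardoEnergy_iteratedDeriv_slice_le (hU : U.OrdConnected)
    (hT : T.OrdConnected) (hp : 0 < p) (hs : 0 ≤ s) (hsm : s ≠ ⌊s⌋₊) :
    ∃ C : ℝ≥0∞, C ≠ ⊤ ∧ ∀ f : ℝ × ℝ → ℝ, ContDiff ℝ (⌊s⌋₊ : ℕ) f →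
      ∫⁻ x in U, gagliardoEnergy p (1 + (s - ⌊s⌋₊) * p) T (iteratedDeriv ⌊s⌋₊ fun y => f (x, y))
        ≤ C * sob2 s p (U ×ˢ T) f ^ p := by
  have hσ : 0 < (s - ⌊s⌋₊) * p := mul_pos (sub_pos.2 ((Nat.floor_le hs).lt_of_ne' hsm)) hp
  obtain ⟨C, hC, hslice⟩ := exists_lintegral_gagliardoEnergy_slice_le
    (E := ContinuousMultilinearMap ℝ (fun _ : Fin ⌊s⌋₊ => ℝ × ℝ) ℝ) hU hT hp hσ
  refine ⟨C * 2, by finiteness, fun f hf => ?_⟩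
  calc ∫⁻ x in U, gagliardoEnergy p (1 + (s - ⌊s⌋₊) * p) T (iteratedDeriv ⌊s⌋₊ fun y => f (x, y))
      ≤ ∫⁻ x in U, gagliardoEnergy p (1 + (s - ⌊s⌋₊) * p) T
          fun y => iteratedFDeriv ℝ ⌊s⌋₊ f (x, y) := by
        refine lintegral_mono fun x => gagliardoEnergy_mono hp.le _ _ fun y y' => ?_
        rw [iteratedDeriv_slice hf le_rfl, iteratedDeriv_slice hf le_rfl, ← sub_apply]
        exact enorm_apply_const_le _ (by simp [Prod.norm_def])
    _ ≤ C * (gagliardoEnergy p (2 + (s - ⌊s⌋₊) * p) (U ×ˢ T) (iteratedFDeriv ℝ ⌊s⌋₊ f)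
          + ∫⁻ z in U ×ˢ T, ‖iteratedFDeriv ℝ ⌊s⌋₊ f z‖ₑ ^ p) :=
        hslice _ (hf.continuous_iteratedFDeriv le_rfl).stronglyMeasurable
    _ ≤ C * (sob2 s p (U ×ˢ T) f ^ p + sob2 s p (U ×ˢ T) f ^ p) := by
        gcongr
        · exact gagliardoEnergy_iteratedFDeriv_le_sob2_rpow hp _ f hsm
        · exact lintegral_enorm_iteratedFDeriv_rpow_le_sob2_rpow hp _ f le_rfl
    _ = C * 2 * sob2 s p (U ×ˢ T) f ^ p := by rw [← two_mul, mul_assoc]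

theorem exists_lintegral_sob1_slice_rpow_le (hU : U.OrdConnected) (hT : T.OrdConnected)
    (hp : 0 < p) (hs : 0 ≤ s) :
    ∃ C : ℝ≥0∞, C ≠ ⊤ ∧ ∀ f : ℝ × ℝ → ℝ, ContDiff ℝ (⌊s⌋₊ : ℕ) f →
      ∫⁻ x in U, sob1 s p T (fun y => f (x, y)) ^ p ≤ C * sob2 s p (U ×ˢ T) f ^ p := by
  obtain ⟨K, hK, hfrac⟩ : ∃ K : ℝ≥0∞, K ≠ ⊤ ∧ ∀ f : ℝ × ℝ → ℝ, ContDiff ℝ (⌊s⌋₊ : ℕ) f →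
      ∫⁻ x in U, (if s = ⌊s⌋₊ then 0
        else gagliardoEnergy p (1 + (s - ⌊s⌋₊) * p) T (iteratedDeriv ⌊s⌋₊ fun y => f (x, y)))
      ≤ K * sob2 s p (U ×ˢ T) f ^ p := by
    by_cases hsm : s = ⌊s⌋₊
    · exact ⟨0, zero_ne_top, fun f _ => by simp [← hsm]⟩
    · simpa only [if_neg hsm] using
        exists_lintegral_gagliardoEnergy_iteratedDeriv_slice_le hU hT hp hs hsm
  set n := ⌊s⌋₊ + 1
  refine ⟨2 ^ p * ((n : ℝ≥0∞) ^ p * n + K), by finiteness, fun f hf => ?_⟩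
  have hle {j : ℕ} (hj : j ∈ Finset.range n) : j ≤ ⌊s⌋₊ := Nat.lt_succ_iff.1 (Finset.mem_range.1 hj)
  have hmeas : ∀ j ∈ Finset.range n, Measurable fun x =>
      ∫⁻ t in T, ‖iteratedDeriv j (fun y => f (x, y)) t‖ₑ ^ p := fun j hj =>
    ((continuous_iteratedDeriv_slice hf (by exact_mod_cast hle hj)).enorm.measurable.pow_const
      p).lintegral_prod_right'
  calc ∫⁻ x in U, sob1 s p T (fun y => f (x, y)) ^ p
      ≤ ∫⁻ x in U, 2 ^ p * ((n : ℝ≥0∞) ^ p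
          * (∑ j ∈ Finset.range n, ∫⁻ t in T, ‖iteratedDeriv j (fun y => f (x, y)) t‖ₑ ^ p)
          + if s = ⌊s⌋₊ then 0
            else gagliardoEnergy p (1 + (s - ⌊s⌋₊) * p) T (iteratedDeriv ⌊s⌋₊ fun y => f (x, y))) :=
        lintegral_mono fun x => sob1_rpow_le hp s T _
    _ ≤ 2 ^ p * ((n : ℝ≥0∞) ^ p * (∑ _j ∈ Finset.range n, sob2 s p (U ×ˢ T) f ^ p)
          + K * sob2 s p (U ×ˢ T) f ^ p) := by
        rw [lintegral_const_mul' _ _ (by finiteness),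
          lintegral_add_left ((Finset.measurable_sum _ hmeas).const_mul _),
          lintegral_const_mul _ (Finset.measurable_sum _ hmeas), lintegral_finsetSum _ hmeas]
        gcongr with j hj
        · exact lintegral_enorm_iteratedDeriv_slice_rpow_le U T hp hf (hle hj)
        · exact hfrac f hf
    _ = _ := by
        rw [Finset.sum_const, Finset.card_range, nsmul_eq_mul]
        ring

theorem exists_lintegral_sob1_slice_rpow_rpow_inv_le (hU : U.OrdConnected) (hT : T.OrdConnected)
    (hp : 0 < p) (hs : 0 ≤ s) :
    ∃ C : ℝ≥0∞, C ≠ ⊤ ∧ ∀ f : ℝ × ℝ → ℝ, ContDiff ℝ (⌊s⌋₊ : ℕ) f →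
      (∫⁻ x in U, sob1 s p T (fun y => f (x, y)) ^ p) ^ (1 / p) ≤ C * sob2 s p (U ×ˢ T) f := by
  obtain ⟨C, hC, hslice⟩ := exists_lintegral_sob1_slice_rpow_le hU hT hp hs
  refine ⟨C ^ (1 / p), by finiteness, fun f hf => ?_⟩
  rw [one_div, ENNReal.rpow_inv_le_iff hp, ENNReal.mul_rpow_of_nonneg _ _ hp.le,
    ENNReal.rpow_inv_rpow hp.ne']
  exact hslice f hf

theorem stmt3_general (hU : U.OrdConnected) (hT : T.OrdConnected) (hp : 0 < p) (hs : 0 ≤ s) :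
    ∃ C : ℝ≥0∞, C ≠ ⊤ ∧ ∀ f : ℝ × ℝ → ℝ, ContDiff ℝ (⌊s⌋₊ : ℕ) f →
      (∫⁻ x in U, sob1 s p T (fun y => f (x, y)) ^ p) ^ (1 / p)
          + (∫⁻ y in T, sob1 s p U (fun x => f (x, y)) ^ p) ^ (1 / p)
        ≤ C * sob2 s p (U ×ˢ T) f := by
  obtain ⟨C₁, hC₁, hfst⟩ := exists_lintegral_sob1_slice_rpow_rpow_inv_le hU hT hp hs
  obtain ⟨C₂, hC₂, hsnd⟩ := exists_lintegral_sob1_slice_rpow_rpow_inv_le hT hU hp hs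
  refine ⟨C₁ + C₂, by finiteness, fun f hf => ?_⟩
  have hswap : sob2 s p (T ×ˢ U) (f ∘ Prod.swap) = sob2 s p (U ×ˢ T) f := by
    rw [← preimage_swap_prod]
    exact sob2_comp_linearIsometryEquiv s p _ f (.prodComm ℝ ℝ ℝ) Measure.measurePreserving_swap
  rw [add_mul]
  gcongr
  · exact hfst f hf
  · rw [← hswap]
    exact hsnd (f ∘ Prod.swap) (hf.comp (contDiff_snd.prodMk contDiff_fst))

end Slicing

/-- Slicing estimate: on `Ω = ℝ × I` with `I` a bounded interval,
for `1 ≤ p < ∞` and `s ≥ 0`, the mixed Bochner norms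
`‖f‖_{Lᵖ_x(ℝ; W^{s,p}_y(I))} + ‖f‖_{Lᵖ_y(I; W^{s,p}_x(ℝ))}` are controlled by
`C ‖f‖_{W^{s,p}(Ω)}`. -/
theorem stmt3 (a b : ℝ) (hab : a < b) (p s : ℝ) (hp : 1 ≤ p) (hs : 0 ≤ s) :
    ∃ C : ℝ≥0∞, C ≠ ⊤ ∧
      ∀ f : ℝ × ℝ → ℝ, ContDiff ℝ (⌊s⌋₊ : ℕ) f →
        (∫⁻ x : ℝ, (sob1 s p (Set.Icc a b) (fun y => f (x, y))) ^ p) ^ (1 / p)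
            + (∫⁻ y in Set.Icc a b, (sob1 s p Set.univ (fun x => f (x, y))) ^ p) ^ (1 / p)
          ≤ C * sob2 s p (Set.univ ×ˢ Set.Icc a b) f := by
  simpa using stmt3_general ordConnected_univ ordConnected_Icc (zero_lt_one.trans_le hp) hs
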